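/- For every k ∈ ℕ and every Δ ∈ {≤, =}, we have the strict inclusions L(CD_1, CF[−λ], (t∧Δk)) ⊊ L(CD_2, CF[−λ], (t∧Δ1)) ⊊ L(CD_3, CF[−λ], (t∧Δk)), both with and without erasing rules. -/

import Mathlib

namespace CDHybrid

/-- Symbols: nonterminals are natural numbers, terminals come from `T`. -/
abbrev Symb (T : Type) := ℕ ⊕ T

/-- Sentential forms. -/
abbrev SForm (T : Type) := List (Symb T)

/-- A context-free rule `A → z`. -/
abbrev Rule (T : Type) := ℕ × SForm T

/-- Number of nonterminal occurrences in a sentential form. -/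
def ntCount {T : Type} (x : SForm T) : ℕ := (x.filter Sum.isLeft).length

/-- One rewriting step using some rule of the rule set `P`. -/
def RStep {T : Type} (P : List (Rule T)) (x y : SForm T) : Prop :=
  ∃ r ∈ P, ∃ u v : SForm T, x = u ++ Sum.inl r.1 :: v ∧ y = u ++ r.2 ++ v

/-- `m`-step derivation using only rules of `P`. -/
def StepsN {T : Type} (P : List (Rule T)) : ℕ → SForm T → SForm T → Prop
  | 0, x, y => x = y
  | m + 1, x, y => ∃ z, RStep P x z ∧ StepsN P m z y

/-- `m`-step derivation using only rules of `P`, all intermediate (and the final)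
sentential forms having at most `b` occurrences of nonterminals. -/
def StepsNB {T : Type} (P : List (Rule T)) (b : ℕ) : ℕ → SForm T → SForm T → Prop
  | 0, x, y => x = y
  | m + 1, x, y => ∃ z, RStep P x z ∧ ntCount z ≤ b ∧ StepsNB P b m z y

/-- Derivation modes of CD grammar systems. -/
inductive Mode where
  | eq : ℕ → Mode
  | le : ℕ → Mode
  | ge : ℕ → Mode
  | star : Mode
  | t : Mode
  | conj : Mode → Mode → Mode

/-- The predicate of a derivation mode: `modeOK P f m y` holds if an `m`-step
derivation by the component `P` ending in `y` is acceptable for mode `f`. -/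
def modeOK {T : Type} (P : List (Rule T)) : Mode → ℕ → SForm T → Prop
  | .eq k, m, _ => m = k
  | .le k, m, _ => m ≤ k
  | .ge k, m, _ => k ≤ m
  | .star, _, _ => True
  | .t, _, y => ¬ ∃ z, RStep P y z
  | .conj f g, m, y => modeOK P f m y ∧ modeOK P g m y

/-- A CD grammar system with context-free components. -/
structure CDGS (T : Type) where
  deg : ℕ
  start : ℕ
  comp : Fin deg → List (Rule T)

/-- λ-freeness: no erasing rules. -/
def CDGS.LamFree {T : Type} (G : CDGS T) : Prop :=
  ∀ i : Fin G.deg, ∀ r ∈ G.comp i, r.2 ≠ []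

/-- One derivation step of a component of `G` in mode `f`. -/
def CDGS.ModeStep {T : Type} (G : CDGS T) (f : Mode) (x y : SForm T) : Prop :=
  ∃ i : Fin G.deg, ∃ m : ℕ, StepsN (G.comp i) m x y ∧ modeOK (G.comp i) f m y

/-- One derivation step of a component of `G` in mode `f`, with all produced
sentential forms having at most `b` nonterminal occurrences. -/
def CDGS.ModeStepB {T : Type} (G : CDGS T) (f : Mode) (b : ℕ) (x y : SForm T) : Prop :=
  ∃ i : Fin G.deg, ∃ m : ℕ, StepsNB (G.comp i) b m x y ∧ modeOK (G.comp i) f m y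

/-- The language generated by `G` in mode `f`. -/
def CDGS.lang {T : Type} (G : CDGS T) (f : Mode) : Set (List T) :=
  { w | Relation.TransGen (G.ModeStep f) [Sum.inl G.start] (w.map Sum.inr) }

/-- The words of the language of `G` in mode `f` possessing a derivation of index
at most `b`, i.e., all sentential forms occurring in it have at most `b`
nonterminal occurrences. -/
def CDGS.langB {T : Type} (G : CDGS T) (f : Mode) (b : ℕ) : Set (List T) :=
  { w | ntCount ([Sum.inl G.start] : SForm T) ≤ b ∧
      Relation.TransGen (G.ModeStepB f b) [Sum.inl G.start] (w.map Sum.inr) }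

/-- Two languages are considered equal iff they differ at most in the empty word. -/
def EqL {T : Type} (L₁ L₂ : Set (List T)) : Prop := L₁ \ {[]} = L₂ \ {[]}

/-- The family `L(CD_n, CF[−λ], f)`; `lf = true` forbids erasing rules. -/
def CDFam (T : Type) (lf : Bool) (n : ℕ) (f : Mode) : Set (Set (List T)) :=
  { L | ∃ G : CDGS T, G.deg ≤ n ∧ (lf = true → G.LamFree) ∧ EqL (G.lang f) L }

/-- The family `L(CD_∞, CF[−λ], f)`. -/
def CDFamInf (T : Type) (lf : Bool) (f : Mode) : Set (Set (List T)) :=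
  { L | ∃ G : CDGS T, (lf = true → G.LamFree) ∧ EqL (G.lang f) L }

/-- The family `L_m(CD_n, CF[−λ], f)` of such languages of index at most `m`. -/
def CDFamInd (T : Type) (lf : Bool) (n : ℕ) (f : Mode) (m : ℕ) : Set (Set (List T)) :=
  { L | ∃ G : CDGS T, G.deg ≤ n ∧ (lf = true → G.LamFree) ∧ EqL (G.lang f) L ∧
      G.lang f ⊆ G.langB f m }

/-- The family `L_m(CD_∞, CF[−λ], f)`. -/
def CDFamIndInf (T : Type) (lf : Bool) (f : Mode) (m : ℕ) : Set (Set (List T)) :=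
  { L | ∃ G : CDGS T, (lf = true → G.LamFree) ∧ EqL (G.lang f) L ∧ G.lang f ⊆ G.langB f m }

/-- The family `L_fin(CD_∞, CF[−λ], f)`. -/
def CDFamFinInf (T : Type) (lf : Bool) (f : Mode) : Set (Set (List T)) :=
  { L | ∃ m : ℕ, 1 ≤ m ∧ L ∈ CDFamIndInf T lf f m }

/-- A context-free grammar. -/
structure CFG (T : Type) where
  start : ℕ
  rules : List (Rule T)

/-- The language generated by a context-free grammar. -/
def CFG.lang {T : Type} (G : CFG T) : Set (List T) :=
  { w | Relation.ReflTransGen (RStep G.rules) [Sum.inl G.start] (w.map Sum.inr) }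

/-- The words of `G.lang` having a derivation of index at most `m`. -/
def CFG.langB {T : Type} (G : CFG T) (m : ℕ) : Set (List T) :=
  { w | ntCount ([Sum.inl G.start] : SForm T) ≤ m ∧
      Relation.ReflTransGen (fun x y => RStep G.rules x y ∧ ntCount y ≤ m)
        [Sum.inl G.start] (w.map Sum.inr) }

/-- The family `L(CF)` of context-free languages. -/
def CFFam (T : Type) : Set (Set (List T)) := { L | ∃ G : CFG T, EqL G.lang L }

/-- The family `L_m(CF)` of context-free languages of index at most `m`. -/
def CFFamInd (T : Type) (m : ℕ) : Set (Set (List T)) :=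
  { L | ∃ G : CFG T, EqL G.lang L ∧ G.lang ⊆ G.langB m }

/-- The family `L_fin(CF)` of context-free languages of finite index. -/
def CFFamFin (T : Type) : Set (Set (List T)) :=
  { L | ∃ m : ℕ, 1 ≤ m ∧ L ∈ CFFamInd T m }

/-- A grammar is linear if every right-hand side contains at most one nonterminal. -/
def CFG.Linear {T : Type} (G : CFG T) : Prop := ∀ r ∈ G.rules, ntCount r.2 ≤ 1

/-- The family `L(LIN)` of linear context-free languages. -/
def LinFam (T : Type) : Set (Set (List T)) :=
  { L | ∃ G : CFG T, G.Linear ∧ EqL G.lang L }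

/-- The family `L(FIN)` of finite languages. -/
def FinFam (T : Type) : Set (Set (List T)) := { L | L.Finite }

/-- A programmed grammar with context-free rules. -/
structure PG (T : Type) where
  start : ℕ
  nLab : ℕ
  rule : Fin nLab → Rule T
  succ : Fin nLab → Set (Fin nLab)
  fail : Fin nLab → Set (Fin nLab)

def PG.LamFree {T : Type} (G : PG T) : Prop := ∀ r : Fin G.nLab, (G.rule r).2 ≠ []

/-- No appearance checking: all failure fields are empty. -/
def PG.NoAC {T : Type} (G : PG T) : Prop := ∀ r : Fin G.nLab, G.fail r = ∅

/-- One step of a programmed grammar on pairs (sentential form, label). -/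
def PG.PStep {T : Type} (G : PG T) (p q : SForm T × Fin G.nLab) : Prop :=
  (∃ u v : SForm T, p.1 = u ++ Sum.inl (G.rule p.2).1 :: v ∧
      q.1 = u ++ (G.rule p.2).2 ++ v ∧ q.2 ∈ G.succ p.2) ∨
  (Sum.inl (G.rule p.2).1 ∉ p.1 ∧ q.1 = p.1 ∧ q.2 ∈ G.fail p.2)

/-- The language generated by a programmed grammar. -/
def PG.lang {T : Type} (G : PG T) : Set (List T) :=
  { w | ∃ r₁ r₂ : Fin G.nLab,
      Relation.ReflTransGen G.PStep ([Sum.inl G.start], r₁) (w.map Sum.inr, r₂) }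

/-- The words of `G.lang` having a derivation of index at most `m`. -/
def PG.langB {T : Type} (G : PG T) (m : ℕ) : Set (List T) :=
  { w | ∃ r₁ r₂ : Fin G.nLab, ntCount ([Sum.inl G.start] : SForm T) ≤ m ∧
      Relation.ReflTransGen (fun p q => G.PStep p q ∧ ntCount q.1 ≤ m)
        ([Sum.inl G.start], r₁) (w.map Sum.inr, r₂) }

/-- The family `L_m(P, CF[−λ][, ac])`: programmed languages of index at most `m`;
`ac = false` forbids appearance checking, `lf = true` forbids erasing rules. -/
def PFamInd (T : Type) (lf ac : Bool) (m : ℕ) : Set (Set (List T)) :=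
  { L | ∃ G : PG T, (lf = true → G.LamFree) ∧ (ac = false → G.NoAC) ∧
      EqL G.lang L ∧ G.lang ⊆ G.langB m }

/-- The family `L_fin(P, CF[−λ][, ac])` of programmed languages of finite index. -/
def PFamFin (T : Type) (lf ac : Bool) : Set (Set (List T)) :=
  { L | ∃ m : ℕ, 1 ≤ m ∧ L ∈ PFamInd T lf ac m }


/-! ### Helper material -/

def DOK (d : ℕ → Mode) : Prop :=
  (∀ (P : List (Rule ℕ)) k m y, modeOK P (d k) m y → m ≤ k) ∧
  (∀ (P : List (Rule ℕ)) k y, modeOK P (d k) k y)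

theorem dok_of (d : ℕ → Mode) (hd : d = Mode.le ∨ d = Mode.eq) : DOK d := by
  rcases hd with rfl | rfl
  · exact ⟨fun P k m y h => h, fun P k y => le_refl k⟩
  · exact ⟨fun P k m y h => le_of_eq h, fun P k y => rfl⟩

abbrev TM (t : List ℕ) : SForm ℕ := t.map Sum.inr

def NApp (P : List (Rule ℕ)) (y : SForm ℕ) : Prop := ∀ r ∈ P, Sum.inl r.1 ∉ y

theorem napp_iff (P : List (Rule ℕ)) (y : SForm ℕ) :
    (¬ ∃ z, RStep P y z) ↔ NApp P y := by
  constructor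
  · intro h r hr hm
    obtain ⟨u, v, rfl⟩ := List.append_of_mem hm
    exact h ⟨_, r, hr, u, v, rfl, rfl⟩
  · rintro h ⟨z, r, hr, u, v, rfl, rfl⟩
    exact h r hr (by simp)

theorem napp_no {P : List (Rule ℕ)} {y z : SForm ℕ} (h : NApp P y) (hs : RStep P y z) : False :=
  (napp_iff P y).2 h ⟨z, hs⟩

theorem napp_steps {P : List (Rule ℕ)} {y z : SForm ℕ} (h : NApp P y) {m : ℕ}
    (hs : StepsN P m y z) : z = y := by
  cases m with
  | zero => exact hs.symm
  | succ m => obtain ⟨_, h1, _⟩ := hs; exact (napp_no h h1).elim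

theorem napp_TM (P : List (Rule ℕ)) (t : List ℕ) : NApp P (TM t) := by
  intro r _ h; simp [TM] at h

theorem nt_append (x y : SForm ℕ) : ntCount (x ++ y) = ntCount x + ntCount y := by
  simp [ntCount]

theorem nt_inl (A : ℕ) (x : SForm ℕ) : ntCount (Sum.inl A :: x) = ntCount x + 1 := rfl

theorem nt_inr (a : ℕ) (x : SForm ℕ) : ntCount (Sum.inr a :: x) = ntCount x := rfl

theorem nt_pos {x : SForm ℕ} (h : 0 < ntCount x) : ∃ B : ℕ, Sum.inl B ∈ x := by
  unfold ntCount at h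
  obtain ⟨s, hs⟩ := List.exists_mem_of_length_pos h
  rw [List.mem_filter] at hs
  rcases s with B | b
  · exact ⟨B, hs.1⟩
  · simp at hs

theorem nt_zero {x : SForm ℕ} (h : ntCount x = 0) : ∃ t : List ℕ, x = TM t := by
  induction x with
  | nil => exact ⟨[], rfl⟩
  | cons a x ih =>
    rcases a with A | a
    · rw [nt_inl] at h; omega
    · rw [nt_inr] at h
      obtain ⟨t, rfl⟩ := ih h
      exact ⟨a :: t, rfl⟩

theorem nt_one {x : SForm ℕ} (h : ntCount x = 1) :
    ∃ p B q, x = TM p ++ Sum.inl B :: TM q := by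
  induction x with
  | nil => simp [ntCount] at h
  | cons a x ih =>
    rcases a with A | a
    · rw [nt_inl] at h
      obtain ⟨t, rfl⟩ := nt_zero (x := x) (by omega)
      exact ⟨[], A, t, rfl⟩
    · rw [nt_inr] at h
      obtain ⟨p, B, q, rfl⟩ := ih h
      exact ⟨a :: p, B, q, rfl⟩

theorem uniq (u : List ℕ) (A : ℕ) (v : List ℕ) : ∀ (p : SForm ℕ) (B : ℕ) (q : SForm ℕ),
    TM u ++ Sum.inl A :: TM v = p ++ Sum.inl B :: q → p = TM u ∧ B = A ∧ q = TM v := by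
  induction u with
  | nil =>
    intro p B q h
    cases p with
    | nil => simp at h; exact ⟨rfl, h.1.symm, h.2.symm⟩
    | cons s p =>
      simp at h
      have : (Sum.inl B : Symb ℕ) ∈ TM v := by rw [h.2]; simp
      simp [TM] at this
  | cons a u ih =>
    intro p B q h
    cases p with
    | nil => simp at h
    | cons s p =>
      simp only [TM, List.map_cons, List.cons_append, List.cons.injEq] at h
      obtain ⟨h1, h2, h3⟩ := ih p B q h.2
      exact ⟨by rw [h1, ← h.1]; rfl, h2, h3⟩

/-- Useful linear rules of a component. -/
def Good (P : List (Rule ℕ)) (r : Rule ℕ) : Prop := ntCount r.2 ≤ 1 ∧ NApp P r.2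

def QR (G : CDGS ℕ) (r : Rule ℕ) : Prop := ∃ i, r ∈ G.comp i ∧ Good (G.comp i) r

inductive Gen (Q : Rule ℕ → Prop) : ℕ → List ℕ → Prop
  | term (A : ℕ) (t : List ℕ) (h : Q (A, TM t)) : Gen Q A t
  | step (A B : ℕ) (p q x : List ℕ) (h : Q (A, TM p ++ Sum.inl B :: TM q)) (hx : Gen Q B x) :
      Gen Q A (p ++ x ++ q)

theorem gen_steps {Q : Rule ℕ → Prop} {R : SForm ℕ → SForm ℕ → Prop}
    (h : ∀ A z, Q (A, z) → ∀ u v, R (TM u ++ Sum.inl A :: TM v) (TM u ++ z ++ TM v))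
    {A : ℕ} {y : List ℕ} (hg : Gen Q A y) : ∀ u v,
    Relation.ReflTransGen R (TM u ++ Sum.inl A :: TM v) (TM (u ++ y ++ v)) := by
  induction hg with
  | term A t hq =>
    intro u v
    have := h A _ hq u v
    simp only [TM, List.map_append] at this ⊢
    exact Relation.ReflTransGen.single this
  | step A B p q x hq _ ih =>
    intro u v
    have h1 := h A _ hq u v
    have h2 := ih (u ++ p) (q ++ v)
    refine Relation.ReflTransGen.head h1 ?_
    simpa [TM] using h2

theorem trans_of_refl {R : SForm ℕ → SForm ℕ → Prop} {S : ℕ} {w : List ℕ}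
    (h : Relation.ReflTransGen R [Sum.inl S] (TM w)) :
    Relation.TransGen R [Sum.inl S] (TM w) := by
  rcases Relation.reflTransGen_iff_eq_or_transGen.1 h with h | h
  · exfalso
    have : (Sum.inl S : Symb ℕ) ∈ TM w := by rw [h]; simp
    simp [TM] at this
  · exact h

/-- Generic extraction of a linear derivation. -/
theorem extract {Q : Rule ℕ → Prop} {R : SForm ℕ → SForm ℕ → Prop} {w : List ℕ}
    (ht : ∀ t y, R (TM t) y → y = TM t)
    (hs : ∀ u A v y, R (TM u ++ Sum.inl A :: TM v) y →
      Relation.ReflTransGen R y (TM w) →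
      y = TM u ++ Sum.inl A :: TM v ∨
      ∃ z, ntCount z ≤ 1 ∧ Q (A, z) ∧ y = TM u ++ z ++ TM v)
    {x : SForm ℕ} (h : Relation.ReflTransGen R x (TM w)) :
    (∀ t, x = TM t → t = w) ∧
    (∀ u A v, x = TM u ++ Sum.inl A :: TM v → ∃ y, Gen Q A y ∧ w = u ++ y ++ v) := by
  have inj : Function.Injective TM := List.map_injective_iff.2 Sum.inr_injective
  induction h using Relation.ReflTransGen.head_induction_on with
  | refl =>
    refine ⟨fun t h => (inj h).symm, fun u A v h => ?_⟩
    exfalso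
    have : (Sum.inl A : Symb ℕ) ∈ TM w := by rw [h]; simp
    simp [TM] at this
  | head h1 h2 ih =>
    refine ⟨?_, ?_⟩
    · rintro t rfl
      exact ih.1 t (ht _ _ h1)
    · rintro u A v rfl
      rcases hs u A v _ h1 h2 with h | ⟨z, hz, hq, h⟩
      · exact ih.2 u A v h
      · rcases Nat.le_one_iff_eq_zero_or_eq_one.1 hz with h0 | h0
        · obtain ⟨t, rfl⟩ := nt_zero h0
          refine ⟨t, Gen.term A t hq, ?_⟩
          exact (ih.1 (u ++ t ++ v) (by rw [h]; simp [TM])).symm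
        · obtain ⟨p, B, q, rfl⟩ := nt_one h0
          obtain ⟨y, hy, hw⟩ := ih.2 (u ++ p) B (q ++ v) (by rw [h]; simp [TM])
          refine ⟨p ++ y ++ q, Gen.step A B p q y hq hy, ?_⟩
          rw [hw]; simp

theorem modestep_TM {G : CDGS ℕ} {f : Mode} {t : List ℕ} {y : SForm ℕ}
    (h : G.ModeStep f (TM t) y) : y = TM t := by
  obtain ⟨i, m, h1, _⟩ := h
  exact napp_steps (napp_TM _ t) h1

def Dead (G : CDGS ℕ) (x : SForm ℕ) : Prop :=
  (∃ A, Sum.inl A ∈ x ∧ ∀ i, ∀ r ∈ G.comp i, r.1 ≠ A) ∨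
  (2 ≤ ntCount x ∧ ∃ i, NApp (G.comp i) x)

theorem step_cases {G : CDGS ℕ} {d : ℕ → Mode} (hd : DOK d) {x y : SForm ℕ}
    (h : G.ModeStep (Mode.conj Mode.t (d 1)) x y) :
    x = y ∨ ∃ i, RStep (G.comp i) x y ∧ NApp (G.comp i) y := by
  obtain ⟨i, m, h1, h2, h3⟩ := h
  have hm := hd.1 _ _ _ _ h3
  have h2' := (napp_iff _ _).1 h2
  rcases Nat.le_one_iff_eq_zero_or_eq_one.1 hm with rfl | rfl
  · exact Or.inl h1
  · obtain ⟨z, hz, hzy⟩ := h1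
    have : z = y := hzy
    subst this
    exact Or.inr ⟨i, hz, h2'⟩

theorem dead_step {G : CDGS ℕ} (hG : G.deg ≤ 2) {d : ℕ → Mode} (hd : DOK d) {x y : SForm ℕ}
    (h : G.ModeStep (Mode.conj Mode.t (d 1)) x y) (hx : Dead G x) : Dead G y := by
  rcases step_cases hd h with rfl | ⟨j, hs, hn⟩
  · exact hx
  · obtain ⟨r, hr, u, v, rfl, rfl⟩ := hs
    rcases hx with ⟨A, hA, hAn⟩ | ⟨h2, i, hi⟩
    · left
      refine ⟨A, ?_, hAn⟩
      have := hAn j r hr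
      simp at hA ⊢
      rcases hA with h | h | h
      · exact Or.inl h
      · exact absurd h.symm this
      · exact Or.inr (Or.inr h)
    · by_cases hij : i = j
      · subst hij
        exact (hi r hr (by simp)).elim
      · left
        have : ∃ B, Sum.inl B ∈ u ++ v := by
          apply nt_pos
          simp only [nt_append, nt_inl] at h2 ⊢
          omega
        obtain ⟨B, hB⟩ := this
        rw [List.mem_append] at hB
        refine ⟨B, by simp; tauto, fun l r' hr' hrB => ?_⟩
        have hl : l = i ∨ l = j := by
          have := l.2; have := i.2; have := j.2
          have : i.1 ≠ j.1 := fun h => hij (Fin.ext h)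
          rcases (by omega : l.1 = i.1 ∨ l.1 = j.1) with h | h
          · exact Or.inl (Fin.ext h)
          · exact Or.inr (Fin.ext h)
        rcases hl with rfl | rfl
        · exact hi r' hr' (by rw [hrB]; simp; tauto)
        · exact hn r' hr' (by rw [hrB]; simp; tauto)

theorem dead_no {G : CDGS ℕ} (hG : G.deg ≤ 2) {d : ℕ → Mode} (hd : DOK d) {x : SForm ℕ}
    {w : List ℕ}
    (h : Relation.ReflTransGen (G.ModeStep (Mode.conj Mode.t (d 1))) x (TM w))
    (hx : Dead G x) : False := by
  have gen : ∀ y, Relation.ReflTransGen (G.ModeStep (Mode.conj Mode.t (d 1))) x y →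
      Dead G y := by
    intro y h
    induction h with
    | refl => exact hx
    | tail _ h2 ih => exact dead_step hG hd h2 ih
  have := gen _ h
  rcases this with ⟨A, hA, _⟩ | ⟨h2, _⟩
  · simp [TM] at hA
  · obtain ⟨B, hB⟩ := nt_pos (x := TM w) (by omega)
    simp [TM] at hB

/-- A linear characterization of two-component systems. -/
theorem lang_iff {G : CDGS ℕ} (hG : G.deg ≤ 2) {d : ℕ → Mode} (hd : DOK d) (w : List ℕ) :
    w ∈ G.lang (Mode.conj Mode.t (d 1)) ↔ Gen (QR G) G.start w := by
  constructor
  · intro h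
    have h' := Relation.TransGen.to_reflTransGen h
    have := (extract (Q := QR G) (fun t y h => modestep_TM h) ?_ h').2 [] G.start [] rfl
    · obtain ⟨y, hy, hw⟩ := this
      simp at hw; subst hw; exact hy
    · intro u A v y h1 h2
      rcases step_cases hd h1 with h | ⟨i, hs, hn⟩
      · exact Or.inl h.symm
      · obtain ⟨⟨B, z⟩, hr, p, q, hx, rfl⟩ := hs
        obtain ⟨rfl, h, rfl⟩ := uniq _ _ _ _ _ _ hx
        subst h
        right
        have hlin : ntCount z ≤ 1 := by
          by_contra hc
          refine dead_no hG hd h2 (Or.inr ⟨?_, i, hn⟩)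
          simp only [nt_append]; omega
        refine ⟨z, hlin, ⟨i, hr, hlin, ?_⟩, rfl⟩
        intro r' hr' hm
        exact hn r' hr' (by simp at hm ⊢; tauto)
  · intro h
    refine trans_of_refl ?_
    have := gen_steps (R := G.ModeStep (Mode.conj Mode.t (d 1))) ?_ h [] []
    · simpa [TM] using this
    · rintro A z ⟨i, hr, hl, hn⟩ u v
      refine ⟨i, 1, ⟨_, ⟨(A, z), hr, TM u, TM v, rfl, rfl⟩, rfl⟩, ?_, hd.2 _ _ _⟩
      refine (napp_iff _ _).2 ?_
      intro r' hr' hm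
      apply hn r' hr'
      simpa [TM] using hm

theorem loop_steps {P : List (Rule ℕ)} {A : ℕ} {z : SForm ℕ} (h1 : (A, z) ∈ P)
    (h2 : (A, [Sum.inl A]) ∈ P) (u v : SForm ℕ) : ∀ m,
    StepsN P (m + 1) (u ++ Sum.inl A :: v) (u ++ z ++ v) := by
  intro m
  induction m with
  | zero => exact ⟨_, ⟨(A, z), h1, u, v, rfl, rfl⟩, rfl⟩
  | succ m ih => exact ⟨_, ⟨(A, [Sum.inl A]), h2, u, v, rfl, rfl⟩, by simpa using ih⟩

theorem loop_mode {G : CDGS ℕ} {d : ℕ → Mode} (hd : DOK d) {k : ℕ} (hk : 1 ≤ k)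
    (i : Fin G.deg) {A : ℕ} {z : SForm ℕ} (h1 : (A, z) ∈ G.comp i)
    (h2 : (A, [Sum.inl A]) ∈ G.comp i) (u v : SForm ℕ)
    (hn : NApp (G.comp i) (u ++ z ++ v)) :
    G.ModeStep (Mode.conj Mode.t (d k)) (u ++ Sum.inl A :: v) (u ++ z ++ v) := by
  obtain ⟨m, rfl⟩ : ∃ m, k = m + 1 := ⟨k - 1, by omega⟩
  exact ⟨i, m + 1, loop_steps h1 h2 u v m, (napp_iff _ _).2 hn, hd.2 _ _ _⟩

open Classical in
/-- The padded system. -/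
noncomputable def pad (G : CDGS ℕ) : CDGS ℕ where
  deg := G.deg
  start := G.start
  comp := fun i => (G.comp i).filter (fun r => decide (Good (G.comp i) r)) ++
    (G.comp i).map (fun r => (r.1, [Sum.inl r.1]))

theorem mem_pad {G : CDGS ℕ} {i : Fin G.deg} {r : Rule ℕ} :
    r ∈ (pad G).comp i ↔ (r ∈ G.comp i ∧ Good (G.comp i) r) ∨
      ∃ r' ∈ G.comp i, r = (r'.1, [Sum.inl r'.1]) := by
  simp only [pad, List.mem_append, List.mem_filter, List.mem_map, decide_eq_true_eq]
  constructor
  · rintro (h | ⟨r', h, h'⟩)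
    · exact Or.inl h
    · exact Or.inr ⟨r', h, h'.symm⟩
  · rintro (h | ⟨r', h, h'⟩)
    · exact Or.inl h
    · exact Or.inr ⟨r', h, h'.symm⟩

theorem napp_pad {G : CDGS ℕ} {i : Fin G.deg} {y : SForm ℕ} :
    NApp ((pad G).comp i) y ↔ NApp (G.comp i) y := by
  constructor
  · intro h r hr
    exact h (r.1, [Sum.inl r.1]) (mem_pad.2 (Or.inr ⟨r, hr, rfl⟩))
  · intro h r hr
    rcases mem_pad.1 hr with h' | ⟨r', hr', rfl⟩
    · exact h r h'.1
    · exact h r' hr'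

theorem pad_steps {G : CDGS ℕ} (i : Fin G.deg) (u : List ℕ) (A : ℕ) (v : List ℕ) (y : SForm ℕ) :
    ∀ m, StepsN ((pad G).comp i) m (TM u ++ Sum.inl A :: TM v) y →
      y = TM u ++ Sum.inl A :: TM v ∨
      ∃ z, ntCount z ≤ 1 ∧ QR G (A, z) ∧ y = TM u ++ z ++ TM v := by
  intro m
  induction m with
  | zero => intro h; exact Or.inl h.symm
  | succ m ih =>
    rintro ⟨x, ⟨⟨B, z⟩, hr, p, q, hx, rfl⟩, hs⟩
    obtain ⟨rfl, h, rfl⟩ := uniq _ _ _ _ _ _ hx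
    subst h
    rcases mem_pad.1 hr with ⟨h1, h2⟩ | ⟨r', hr', h⟩
    · right
      refine ⟨z, h2.1, ⟨i, h1, h2⟩, ?_⟩
      refine napp_steps (napp_pad.2 ?_) hs
      intro r' hr' hm
      apply h2.2 r' hr'
      simpa [TM] using hm
    · simp only [Prod.mk.injEq] at h
      obtain ⟨h, rfl⟩ := h
      apply ih
      simp only at hs
      rw [← h] at hs
      simpa using hs

theorem pad_lang_iff {G : CDGS ℕ} {d : ℕ → Mode} (hd : DOK d) {k : ℕ} (hk : 1 ≤ k)
    (w : List ℕ) :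
    w ∈ (pad G).lang (Mode.conj Mode.t (d k)) ↔ Gen (QR G) G.start w := by
  constructor
  · intro h
    have h' := Relation.TransGen.to_reflTransGen h
    have := (extract (Q := QR G) (fun t y h => modestep_TM h) ?_ h').2 [] G.start [] rfl
    · obtain ⟨y, hy, hw⟩ := this
      simp at hw; subst hw; exact hy
    · rintro u A v y ⟨i, m, h1, _⟩ _
      exact pad_steps (G := G) i u A v y m h1
  · intro h
    refine trans_of_refl ?_
    have := gen_steps (R := (pad G).ModeStep (Mode.conj Mode.t (d k))) ?_ h [] []
    · have e : (pad G).start = G.start := rfl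
      rw [e]
      simpa [TM] using this
    · rintro A z ⟨i, hr, hl, hn⟩ u v
      refine loop_mode (G := pad G) hd hk i (mem_pad.2 (Or.inl ⟨hr, hl, hn⟩))
        (mem_pad.2 (Or.inr ⟨_, hr, rfl⟩)) _ _ (napp_pad.2 ?_)
      intro r' hr' hm
      apply hn r' hr'
      simpa [TM] using hm

/-! ### One component: finite languages -/

theorem rstep_fin (P : List (Rule ℕ)) (x : SForm ℕ) : {y | RStep P x y}.Finite := by
  have : {y | RStep P x y} ⊆ (fun q : Rule ℕ × ℕ =>
      x.take q.2 ++ q.1.2 ++ x.drop (q.2 + 1)) '' ({r | r ∈ P} ×ˢ Set.Iic x.length) := by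
    rintro y ⟨r, hr, u, v, rfl, rfl⟩
    refine ⟨(r, u.length), ⟨hr, by simp⟩, ?_⟩
    simp
  exact ((P.finite_toSet.prod (Set.finite_Iic _)).image _).subset this

theorem stepsN_fin (P : List (Rule ℕ)) (m : ℕ) : ∀ x : SForm ℕ, {y | StepsN P m x y}.Finite := by
  induction m with
  | zero => intro x; exact (Set.finite_singleton x).subset (fun y hy => (Eq.symm hy : y = x))
  | succ m ih =>
    intro x
    refine ((rstep_fin P x).biUnion (fun z _ => ih z)).subset ?_
    rintro y ⟨z, h1, h2⟩
    simp only [Set.mem_iUnion]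
    exact ⟨z, h1, h2⟩

theorem one_fin {G : CDGS ℕ} (hG : G.deg ≤ 1) {d : ℕ → Mode} (hd : DOK d) (k : ℕ) :
    (G.lang (Mode.conj Mode.t (d k))).Finite := by
  have hf : (⋃ i : Fin G.deg, ⋃ m ∈ Set.Iic k,
      {y | StepsN (G.comp i) m [Sum.inl G.start] y}).Finite :=
    Set.finite_iUnion (fun i => (Set.finite_Iic k).biUnion (fun m _ => stepsN_fin _ _ _))
  have inj : Function.Injective TM := List.map_injective_iff.2 Sum.inr_injective
  refine (hf.preimage (f := TM) inj.injOn).subset ?_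
  intro w hw
  have key : ∀ y, Relation.TransGen (G.ModeStep (Mode.conj Mode.t (d k))) [Sum.inl G.start] y →
      ∃ i m, m ≤ k ∧ StepsN (G.comp i) m [Sum.inl G.start] y ∧ NApp (G.comp i) y := by
    intro y h
    induction h with
    | single h =>
      obtain ⟨i, m, h1, h2, h3⟩ := h
      exact ⟨i, m, hd.1 _ _ _ _ h3, h1, (napp_iff _ _).1 h2⟩
    | tail _ h ih =>
      obtain ⟨i, m, hm, h1, h2⟩ := ih
      obtain ⟨j, m', h3, _⟩ := h
      have : j = i := by apply Fin.ext; have := i.2; have := j.2; omega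
      subst this
      rw [napp_steps h2 h3]
      exact ⟨j, m, hm, h1, h2⟩
  obtain ⟨i, m, hm, h1, _⟩ := key _ hw
  simp only [Set.mem_preimage, Set.mem_iUnion]
  exact ⟨i, m, hm, h1⟩

noncomputable def finG (F : Finset (List ℕ)) : CDGS ℕ where
  deg := 1
  start := 0
  comp := fun _ => F.toList.map (fun w => (0, TM w))

theorem finG_gen (F : Finset (List ℕ)) (w : List ℕ) : Gen (QR (finG F)) 0 w ↔ w ∈ F := by
  have inj : Function.Injective TM := List.map_injective_iff.2 Sum.inr_injective
  constructor
  · intro h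
    cases h with
    | term _ _ h =>
      obtain ⟨i, h, _⟩ := h
      simp only [finG, List.mem_map, Finset.mem_toList, Prod.mk.injEq] at h
      obtain ⟨a, ha, _, h⟩ := h
      exact inj h ▸ ha
    | step _ B p q x h _ =>
      exfalso
      obtain ⟨i, h, _⟩ := h
      simp only [finG, List.mem_map, Finset.mem_toList, Prod.mk.injEq] at h
      obtain ⟨a, ha, _, h⟩ := h
      have : (Sum.inl B : Symb ℕ) ∈ TM a := by rw [h]; simp
      simp [TM] at this
  · intro h
    refine Gen.term _ _ ⟨⟨0, Nat.one_pos⟩, ?_, ?_, napp_TM _ _⟩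
    · simp only [finG, List.mem_map, Finset.mem_toList]
      exact ⟨w, h, rfl⟩
    · by_contra hc
      obtain ⟨B, hB⟩ := nt_pos (x := TM w) (by simp only at hc; omega)
      simp [TM] at hB

/-! ### An infinite language with two components -/

def infG : CDGS ℕ where
  deg := 2
  start := 0
  comp := fun i => [(i.1, [Sum.inr 0, Sum.inl (1 - i.1)]), (i.1, [Sum.inr 0])]

theorem infG_gen (n : ℕ) : ∀ i : Fin 2, Gen (QR infG) i.1 (List.replicate (n + 1) 0) := by
  induction n with
  | zero =>
    intro i
    refine Gen.term _ _ ⟨i, by simp [infG, TM], by simp [ntCount], ?_⟩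
    exact napp_TM _ _
  | succ n ih =>
    intro i
    have h := Gen.step (Q := QR infG) i.1 (1 - i.1) [0] [] _
      ⟨i, by simp [infG, TM], le_refl _, ?_⟩ (ih ⟨1 - i.1, by omega⟩)
    · simpa [List.replicate_succ] using h
    · intro r hr
      have h1 : r.1 = i.1 := by
        simp [infG] at hr
        rcases hr with rfl | rfl <;> rfl
      have := i.2
      simp [TM, h1]
      omega

/-! ### A nonlinear language with three components -/

def triG : CDGS ℕ where
  deg := 3
  start := 0
  comp := fun i => [(i.1, [Sum.inl i.1]),
    (i.1, [Sum.inl ((i.1 + 1) % 3), Sum.inl ((i.1 + 2) % 3)]),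
    (i.1, [Sum.inr 0, Sum.inl ((i.1 + 2) % 3), Sum.inr 1]),
    (i.1, [Sum.inr 2, Sum.inl ((i.1 + 2) % 3), Sum.inr 3]),
    (i.1, [Sum.inr 0, Sum.inr 1]),
    (i.1, [Sum.inr 2, Sum.inr 3])]

theorem triG_fst {i : Fin 3} {r : Rule ℕ} (h : r ∈ triG.comp i) : r.1 = i.1 := by
  simp [triG] at h
  rcases h with rfl | rfl | rfl | rfl | rfl | rfl <;> rfl

def tn : SForm ℕ → List ℕ
  | [] => []
  | Sum.inl _ :: x => tn x
  | Sum.inr a :: x => a :: tn x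

theorem tn_append (x y : SForm ℕ) : tn (x ++ y) = tn x ++ tn y := by
  induction x with
  | nil => rfl
  | cons a x ih => rcases a with A | a <;> simp [tn, ih]

theorem tn_TM (t : List ℕ) : tn (TM t) = t := by
  induction t with
  | nil => rfl
  | cons a t ih => simpa [tn] using ih

def Bal (x : SForm ℕ) : Prop :=
  (tn x).count 0 = (tn x).count 1 ∧ (tn x).count 2 = (tn x).count 3

theorem triG_bal_rule {i : Fin 3} {r : Rule ℕ} (h : r ∈ triG.comp i) : Bal r.2 := by
  simp [triG] at h
  rcases h with rfl | rfl | rfl | rfl | rfl | rfl <;> simp [Bal, tn, List.count_cons]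

theorem triG_bal_steps {i : Fin 3} (m : ℕ) : ∀ {x y : SForm ℕ}, StepsN (triG.comp i) m x y →
    Bal x → Bal y := by
  induction m with
  | zero => intro x y h hx; have : x = y := h; exact this ▸ hx
  | succ m ih =>
    rintro x y ⟨z, ⟨r, hr, u, v, rfl, rfl⟩, h⟩ hx
    refine ih h ?_
    have hb := triG_bal_rule hr
    simp only [Bal, tn_append, tn, List.count_append] at hx hb ⊢
    omega

theorem triG_bal {f : Mode} {w : List ℕ} (h : w ∈ triG.lang f) :
    w.count 0 = w.count 1 ∧ w.count 2 = w.count 3 := by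
  have h' := Relation.TransGen.to_reflTransGen h
  have : Bal (TM w) := by
    have gen : ∀ y, Relation.ReflTransGen (triG.ModeStep f) [Sum.inl triG.start] y → Bal y := by
      intro y h
      induction h with
      | refl => simp [Bal, tn]
      | tail _ h2 ih =>
        obtain ⟨i, m, h1, _⟩ := h2
        exact triG_bal_steps m h1 ih
    exact gen _ h'
  simpa only [Bal, tn_TM] using this

def W (n : ℕ) : List ℕ :=
  List.replicate n 0 ++ (List.replicate n 1 ++ (List.replicate n 2 ++ List.replicate n 3))

def FF (n a : ℕ) : SForm ℕ :=
  TM (List.replicate n 0) ++ Sum.inl a :: (TM (List.replicate n 1 ++ List.replicate n 2) ++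
    Sum.inl ((a + 1) % 3) :: TM (List.replicate n 3))

theorem tri_mode {d : ℕ → Mode} (hd : DOK d) {k : ℕ} (hk : 1 ≤ k)
    (i : Fin 3) {z : SForm ℕ} (h1 : (i.1, z) ∈ triG.comp i) (u v : SForm ℕ)
    (hn : Sum.inl i.1 ∉ (u ++ z ++ v)) :
    triG.ModeStep (Mode.conj Mode.t (d k)) (u ++ Sum.inl i.1 :: v) (u ++ z ++ v) := by
  refine loop_mode hd hk i h1 (by simp [triG]) u v ?_
  intro r hr
  rw [triG_fst hr]; exact hn

theorem rep_comm (n : ℕ) (a : ℕ) (l : SForm ℕ) :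
    List.replicate n (Sum.inr a : Symb ℕ) ++ Sum.inr a :: l =
    Sum.inr a :: (List.replicate n (Sum.inr a) ++ l) := by
  induction n with
  | zero => rfl
  | succ n ih => simp [List.replicate_succ, ih]

theorem FF_step {d : ℕ → Mode} (hd : DOK d) {k : ℕ} (hk : 1 ≤ k) (n a : ℕ) (ha : a < 3) :
    Relation.ReflTransGen (triG.ModeStep (Mode.conj Mode.t (d k)))
      (FF n a) (FF (n + 1) ((a + 2) % 3)) := by
  have s1 := tri_mode hd hk ⟨a, ha⟩ (z := [Sum.inr 0, Sum.inl ((a + 2) % 3), Sum.inr 1])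
    (by simp [triG]) (TM (List.replicate n 0))
    (TM (List.replicate n 1 ++ List.replicate n 2) ++
      Sum.inl ((a + 1) % 3) :: TM (List.replicate n 3)) (by simp [TM]; omega)
  have e : ((a + 1) % 3 + 2) % 3 = a := by omega
  have s2 := tri_mode hd hk ⟨(a + 1) % 3, by omega⟩
    (z := [Sum.inr 2, Sum.inl (((a + 1) % 3 + 2) % 3), Sum.inr 3])
    (by simp [triG]) (TM (List.replicate n 0) ++ [Sum.inr 0, Sum.inl ((a + 2) % 3), Sum.inr 1] ++
      TM (List.replicate n 1 ++ List.replicate n 2)) (TM (List.replicate n 3))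
      (by simp [TM]; omega)
  refine Relation.ReflTransGen.head s1 (Relation.ReflTransGen.single ?_)
  have e2 : ((a + 2) % 3 + 1) % 3 = a := by omega
  convert s2 using 1
  · simp [TM]
  · simp [FF, TM, List.replicate_succ, e, e2, rep_comm]

theorem FF_reach {d : ℕ → Mode} (hd : DOK d) {k : ℕ} (hk : 1 ≤ k) (n : ℕ) :
    ∃ a < 3, Relation.ReflTransGen (triG.ModeStep (Mode.conj Mode.t (d k)))
      [Sum.inl 0] (FF n a) := by
  induction n with
  | zero =>
    refine ⟨1, by omega, Relation.ReflTransGen.single ?_⟩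
    have := tri_mode hd hk ⟨0, by omega⟩ (z := [Sum.inl 1, Sum.inl 2]) (by simp [triG]) [] []
      (by simp)
    simpa [FF, TM] using this
  | succ n ih =>
    obtain ⟨a, ha, h⟩ := ih
    exact ⟨(a + 2) % 3, by omega, h.trans (FF_step hd hk n a ha)⟩

theorem W_mem {d : ℕ → Mode} (hd : DOK d) {k : ℕ} (hk : 1 ≤ k) (n : ℕ) :
    W (n + 1) ∈ triG.lang (Mode.conj Mode.t (d k)) := by
  obtain ⟨a, ha, h⟩ := FF_reach hd hk n
  refine trans_of_refl (h.trans ?_)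
  have s1 := tri_mode hd hk ⟨a, ha⟩ (z := [Sum.inr 0, Sum.inr 1])
    (by simp [triG]) (TM (List.replicate n 0))
    (TM (List.replicate n 1 ++ List.replicate n 2) ++
      Sum.inl ((a + 1) % 3) :: TM (List.replicate n 3)) (by simp [TM]; omega)
  have s2 := tri_mode hd hk ⟨(a + 1) % 3, by omega⟩
    (z := [Sum.inr 2, Sum.inr 3])
    (by simp [triG]) (TM (List.replicate n 0) ++ [Sum.inr 0, Sum.inr 1] ++
      TM (List.replicate n 1 ++ List.replicate n 2)) (TM (List.replicate n 3))
      (by simp [TM])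
  refine Relation.ReflTransGen.head s1 (Relation.ReflTransGen.single ?_)
  convert s2 using 1
  · simp [TM]
  · simp [W, TM, List.replicate_succ, rep_comm]

/-! ### Nonlinearity -/

theorem pre_rep {n : ℕ} {u x v : List ℕ} (h : u ++ x ++ v = W n) (hu : u.length ≤ n)
    (hv : v.length ≤ n) :
    u = List.replicate u.length 0 ∧ v = List.replicate v.length 3 := by
  constructor
  · have h1 : u <+: W n := ⟨x ++ v, by rw [← h]; simp⟩
    have h2 : List.replicate n 0 <+: W n := ⟨_, rfl⟩
    have h3 := List.prefix_of_prefix_length_le h1 h2 (by simpa using hu)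
    exact List.eq_replicate_iff.2 ⟨rfl, fun b hb => List.eq_of_mem_replicate (h3.subset hb)⟩
  · have h1 : v <:+ W n := ⟨u ++ x, by rw [← h]⟩
    have h2 : List.replicate n 3 <:+ W n :=
      ⟨List.replicate n 0 ++ (List.replicate n 1 ++ List.replicate n 2), by simp [W]⟩
    have h3 := List.suffix_of_suffix_length_le h1 h2 (by simpa using hv)
    exact List.eq_replicate_iff.2 ⟨rfl, fun b hb => List.eq_of_mem_replicate (h3.subset hb)⟩

def Valid (Q : Rule ℕ → Prop) (S B n : ℕ) (u v x : List ℕ) : Prop :=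
  u.length ≤ n ∧ v.length ≤ n ∧ Gen Q B x ∧ u ++ x ++ v = W n ∧
    ∀ y, Gen Q B y → Gen Q S (u ++ y ++ v)

theorem valid_len {Q : Rule ℕ → Prop} {S : ℕ}
    (hb : ∀ w, Gen Q S w → w.count 0 = w.count 1 ∧ w.count 2 = w.count 3)
    {B n m : ℕ} {u v x u' v' x' : List ℕ} (h : Valid Q S B n u v x)
    (h' : Valid Q S B m u' v' x') : u.length + v.length = u'.length + v'.length := by
  obtain ⟨h1, h2, h3, h4, h5⟩ := h
  obtain ⟨h1', h2', h3', h4', h5'⟩ := h'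
  obtain ⟨hu, hv⟩ := pre_rep h4 h1 h2
  obtain ⟨hu', hv'⟩ := pre_rep h4' h1' h2'
  have a := hb _ (h5 _ h3')
  have b := hb _ (h5' _ h3')
  rw [hu, hv] at a
  rw [hu', hv'] at b
  simp [List.count_append, List.count_replicate] at a b
  omega

theorem nonlin {Q : Rule ℕ → Prop} {S : ℕ} (hQ : {r | Q r}.Finite)
    (hb : ∀ w, Gen Q S w → w.count 0 = w.count 1 ∧ w.count 2 = w.count 3)
    (hW : ∀ n, Gen Q S (W (n + 1))) : False := by
  classical
  have hbd : ∀ r : Rule ℕ, ∃ b : ℕ, r.2.length ≤ b ∧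
      ∀ n u v x, Valid Q S r.1 n u v x → u.length + v.length ≤ b := by
    intro r
    by_cases h : ∃ n u v x, Valid Q S r.1 n u v x
    · obtain ⟨n, u, v, x, h⟩ := h
      refine ⟨r.2.length + (u.length + v.length), by omega, ?_⟩
      intro n' u' v' x' h'
      have := valid_len hb h h'
      omega
    · exact ⟨r.2.length, le_refl _, fun n u v x h' => (h ⟨n, u, v, x, h'⟩).elim⟩
  choose b hb1 hb2 using hbd
  obtain ⟨M, hM⟩ := (hQ.image b).bddAbove
  have hM' : ∀ r, Q r → b r ≤ M := fun r hr => hM ⟨r, hr, rfl⟩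
  have key : ∀ B x, Gen Q B x → ∀ u v, Valid Q S B (2 * M + 1) u v x → False := by
    intro B x hg
    induction hg with
    | term A t h =>
      intro u v hv
      have h1 := hb2 (A, TM t) _ _ _ _ hv
      have h2 := hb1 _ |>.trans (hM' _ h)
      have h3 := hM' _ h
      replace h1 := h1.trans h3
      have h4 := congrArg List.length hv.2.2.2.1
      simp [W, TM] at h1 h2 h4
      omega
    | step A C p q x h hx ih =>
      intro u v hv
      have h1 := hb2 (A, TM p ++ Sum.inl C :: TM q) _ _ _ _ hv
      have h2 := hb1 _ |>.trans (hM' _ h)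
      have h3 := hM' _ h
      replace h1 := h1.trans h3
      simp [TM] at h2
      apply ih (u ++ p) (q ++ v)
      refine ⟨by simp; omega, by simp; omega, hx, ?_, ?_⟩
      · rw [← hv.2.2.2.1]; simp
      · intro y hy
        have := hv.2.2.2.2 _ (Gen.step A C p q y h hy)
        simpa using this
  refine key S _ (hW (2 * M)) [] [] ⟨by simp, by simp, hW _, by simp, ?_⟩
  intro y hy
  simpa using hy

theorem QR_fin (G : CDGS ℕ) : {r | QR G r}.Finite := by
  refine (Set.finite_iUnion (fun i : Fin G.deg => (G.comp i).finite_toSet)).subset ?_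
  rintro r ⟨i, h, _⟩
  exact Set.mem_iUnion.2 ⟨i, h⟩

theorem eqL_mem {L M : Set (List ℕ)} (h : EqL L M) {w : List ℕ} (hw : w ≠ []) :
    w ∈ L ↔ w ∈ M := by
  have : w ∈ L \ {[]} ↔ w ∈ M \ {[]} := by rw [show L \ {[]} = M \ {[]} from h]
  simpa [hw] using this

/-- For every k ∈ ℕ (positive) and every Δ ∈ {≤, =},
L(CD_1, CF[−λ], (t∧Δk)) ⊊ L(CD_2, CF[−λ], (t∧Δ1)) ⊊ L(CD_3, CF[−λ], (t∧Δk)),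
both with and without erasing rules. -/
theorem stmt11 (lf : Bool) (k : ℕ) (hk : 1 ≤ k) (d : ℕ → Mode)
    (hd : d = Mode.le ∨ d = Mode.eq) :
    CDFam ℕ lf 1 (Mode.conj Mode.t (d k)) ⊂ CDFam ℕ lf 2 (Mode.conj Mode.t (d 1)) ∧
    CDFam ℕ lf 2 (Mode.conj Mode.t (d 1)) ⊂ CDFam ℕ lf 3 (Mode.conj Mode.t (d k)) := by
  have hD := dok_of d hd
  refine ⟨⟨?_, ?_⟩, ⟨?_, ?_⟩⟩
  · rintro L ⟨G, hG, hlf, hE⟩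
    have hf : (L \ {[]}).Finite := by
      rw [← (show G.lang _ \ {[]} = L \ {[]} from hE)]
      exact (one_fin hG hD k).subset Set.sdiff_subset
    refine ⟨finG hf.toFinset, by simp [finG], ?_, ?_⟩
    · intro _ i r hr
      simp only [finG, List.mem_map, Finset.mem_toList] at hr
      obtain ⟨a, ha, rfl⟩ := hr
      have : a ≠ [] := by
        have := hf.mem_toFinset.1 ha
        simpa using this.2
      simpa [TM] using this
    · have : (finG hf.toFinset).lang (Mode.conj Mode.t (d 1)) = L \ {[]} := by
        ext w
        rw [lang_iff (by simp [finG]) hD]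
        exact (finG_gen hf.toFinset w).trans hf.mem_toFinset
      rw [this]
      simp [EqL]
  · intro h
    have h1 : infG.lang (Mode.conj Mode.t (d 1)) ∈ CDFam ℕ lf 2 (Mode.conj Mode.t (d 1)) := by
      refine ⟨infG, le_refl _, ?_, rfl⟩
      intro _ i r hr
      simp [infG] at hr
      rcases hr with rfl | rfl <;> simp
    obtain ⟨G, hG, _, hE⟩ := h h1
    have hfin := one_fin hG hD k
    refine Set.infinite_of_injective_forall_mem
      (f := fun n : ℕ => List.replicate (n + 1) (0 : ℕ)) ?_ ?_ hfin
    · intro a b hab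
      have := congrArg List.length hab
      simpa using this
    · intro n
      refine (eqL_mem hE (by simp)).2 ?_
      rw [lang_iff (le_refl _) hD]
      exact infG_gen n 0
  · rintro L ⟨G, hG, hlf, hE⟩
    refine ⟨pad G, le_trans hG (by omega), ?_, ?_⟩
    · intro h i r hr
      rcases mem_pad.1 hr with h' | ⟨r', _, rfl⟩
      · exact hlf h i r h'.1
      · simp
    · have : (pad G).lang (Mode.conj Mode.t (d k)) = G.lang (Mode.conj Mode.t (d 1)) := by
        ext w
        rw [pad_lang_iff hD hk, lang_iff hG hD]
      rw [this]; exact hE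
  · intro h
    have h1 : triG.lang (Mode.conj Mode.t (d k)) ∈ CDFam ℕ lf 3 (Mode.conj Mode.t (d k)) := by
      refine ⟨triG, le_refl _, ?_, rfl⟩
      intro _ i r hr
      simp [triG] at hr
      rcases hr with rfl | rfl | rfl | rfl | rfl | rfl <;> simp
    obtain ⟨G, hG, _, hE⟩ := h h1
    refine nonlin (QR_fin G) (S := G.start) ?_ ?_
    · intro w hw
      by_cases h0 : w = []
      · subst h0; simp
      · exact triG_bal ((eqL_mem hE h0).1 ((lang_iff hG hD w).2 hw))
    · intro n
      refine (lang_iff hG hD _).1 ((eqL_mem hE ?_).2 (W_mem hD hk n))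
      simp [W, List.replicate_succ]

end CDHybrid
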